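/- Every nonzero vector p ∈ ℝ^6 satisfying the Plücker relation Ω(p) = 0 arises as the Plücker coordinate vector of a line: there exist linearly independent x, y ∈ ℝ^4 with p(x,y) = p. (Hence the Klein mapping is onto the points of the Klein quadric M_2^4.) -/

import Mathlib

/-- The Plücker coordinate vector `(p01, p02, p03, p23, p31, p12)` of the
pair `x, y ∈ ℝ⁴`. -/
def pluck (x y : Fin 4 → ℝ) : Fin 6 → ℝ :=
  ![x 0 * y 1 - x 1 * y 0, x 0 * y 2 - x 2 * y 0, x 0 * y 3 - x 3 * y 0,
    x 2 * y 3 - x 3 * y 2, x 3 * y 1 - x 1 * y 3, x 1 * y 2 - x 2 * y 1]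

/-- The Klein quadratic form `Ω(p) = p01*p23 + p02*p31 + p03*p12` on `ℝ⁶`. -/
def kleinForm (p : Fin 6 → ℝ) : ℝ :=
  p 0 * p 3 + p 1 * p 4 + p 2 * p 5

/-! If a matrix `A` satisfies the three-term Plücker relations, then any two of its rows satisfy
`A i ∧ A j = A i j • A`. Hence a single nonzero entry `A i j` already writes `A` as a bivector
`x ∧ y`, with `x = (A i j)⁻¹ • A i` and `y = A j`. The vector `p` lists the entries of an
alternating `4 × 4` matrix, for which all Plücker relations reduce to the one with indices
`0, 1, 2, 3`, namely `Ω(p) = 0`. -/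

/-- The matrix `x yᵀ - y xᵀ` of the bivector `x ∧ y`, whose entries are the Plücker coordinates of
the line spanned by `x` and `y`. -/
def wedgeMatrix {n R : Type*} [CommRing R] (x y : n → R) : Matrix n n R :=
  Matrix.vecMulVec x y - Matrix.vecMulVec y x

/-- The left-hand side of the three-term Plücker relation with indices `i, j, k, l`. -/
def pluckerRelator {n R : Type*} [CommRing R] (A : Matrix n n R) (i j k l : n) : R :=
  A i j * A k l - A i k * A j l + A i l * A j k

/-- The three-term Plücker relations on the entries of a matrix, which characterise the matrices of
decomposable bivectors. Repeated indices are allowed, so over a domain the relations by themselves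
force `A` to be alternating. -/
def PluckerRelations {n R : Type*} [CommRing R] (A : Matrix n n R) : Prop :=
  ∀ i j k l, pluckerRelator A i j k l = 0

/-- The alternating `4 × 4` matrix with Plücker coordinates `p`, in the order
`(p01, p02, p03, p23, p31, p12)` used by `pluck`. -/
def pluckerMatrix {R : Type*} [CommRing R] (p : Fin 6 → R) : Matrix (Fin 4) (Fin 4) R :=
  !![0, p 0, p 1, p 2;
    -p 0, 0, p 5, -p 4;
    -p 1, -p 5, 0, p 3;
    -p 2, p 4, -p 3, 0]

section Wedge

variable {n R : Type*} [CommRing R]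

theorem wedgeMatrix_apply (x y : n → R) (k l : n) :
    wedgeMatrix x y k l = x k * y l - y k * x l :=
  rfl

theorem wedgeMatrix_smul_add_smul_left (s t : R) (x y : n → R) :
    wedgeMatrix (s • x + t • y) y = s • wedgeMatrix x y := by
  ext k l
  simp only [wedgeMatrix_apply, Pi.add_apply, Pi.smul_apply, Matrix.smul_apply, smul_eq_mul]
  ring

theorem wedgeMatrix_smul_add_smul_right (s t : R) (x y : n → R) :
    wedgeMatrix x (s • x + t • y) = t • wedgeMatrix x y := by
  ext k l
  simp only [wedgeMatrix_apply, Pi.add_apply, Pi.smul_apply, Matrix.smul_apply, smul_eq_mul]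
  ring

theorem wedgeMatrix_smul_left (c : R) (x y : n → R) :
    wedgeMatrix (c • x) y = c • wedgeMatrix x y := by
  simpa only [zero_smul, add_zero] using wedgeMatrix_smul_add_smul_left c 0 x y

theorem linearIndependent_of_wedgeMatrix_ne_zero [IsDomain R] {x y : n → R}
    (h : wedgeMatrix x y ≠ 0) : LinearIndependent R ![x, y] := by
  have eq_zero_of_smul {c : R} (hc : c • wedgeMatrix x y = 0) : c = 0 :=
    (smul_eq_zero (M := n → n → R)).mp hc |>.resolve_right h
  refine LinearIndependent.pair_iff.mpr fun s t hst ↦ ⟨eq_zero_of_smul ?_, eq_zero_of_smul ?_⟩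
  · rw [← wedgeMatrix_smul_add_smul_left s t, hst]
    simp [wedgeMatrix]
  · rw [← wedgeMatrix_smul_add_smul_right s t, hst]
    simp [wedgeMatrix]

theorem PluckerRelations.wedgeMatrix_row_row {A : Matrix n n R} (hA : PluckerRelations A)
    (i j : n) : wedgeMatrix (A i) (A j) = A i j • A := by
  ext k l
  rw [wedgeMatrix_apply, Matrix.smul_apply, smul_eq_mul]
  have relation : A i j * A k l - A i k * A j l + A i l * A j k = 0 := hA i j k l
  linear_combination -relation

end Wedge

theorem klein_mapping_surjective_general {n K : Type*} [Field K] (A : Matrix n n K)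
    (hA : A ≠ 0) (hrel : PluckerRelations A) :
    ∃ x y : n → K, LinearIndependent K ![x, y] ∧ wedgeMatrix x y = A := by
  obtain ⟨i, j, hij⟩ : ∃ i j, A i j ≠ 0 := by
    contrapose! hA
    exact Matrix.ext hA
  have hwedge : wedgeMatrix ((A i j)⁻¹ • A i) (A j) = A := by
    rw [wedgeMatrix_smul_left, hrel.wedgeMatrix_row_row, inv_smul_smul₀ hij]
  exact ⟨_, _, linearIndependent_of_wedgeMatrix_ne_zero (hwedge.symm ▸ hA), hwedge⟩

theorem pluckerRelations_of_lt {n R : Type*} [LinearOrder n] [CommRing R] {A : Matrix n n R}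
    (hdiag : ∀ i, A i i = 0) (hskew : ∀ i j, A j i = -A i j)
    (h : ∀ i j k l, i < j → j < k → k < l → pluckerRelator A i j k l = 0) :
    PluckerRelations A := by
  have swap₁₂ {i j k l} (e : pluckerRelator A j i k l = 0) : pluckerRelator A i j k l = 0 := by
    unfold pluckerRelator at e ⊢
    linear_combination -e + A k l * hskew i j
  have swap₂₃ {i j k l} (e : pluckerRelator A i k j l = 0) : pluckerRelator A i j k l = 0 := by
    unfold pluckerRelator at e ⊢
    linear_combination -e + A i l * hskew j k
  have swap₃₄ {i j k l} (e : pluckerRelator A i j l k = 0) : pluckerRelator A i j k l = 0 := by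
    unfold pluckerRelator at e ⊢
    linear_combination -e + A i j * hskew k l
  intro i j k l
  -- The five comparisons of the sorting network on four inputs.
  wlog hij : i ≤ j generalizing i j
  · exact swap₁₂ (this j i (by order))
  wlog hkl : k ≤ l generalizing k l
  · exact swap₃₄ (this l k (by order))
  wlog hik : i ≤ k generalizing i j k l
  · exact swap₂₃ (swap₁₂ (swap₃₄ (swap₂₃ (this k l hkl i j hij (by order)))))
  wlog hjl : j ≤ l generalizing j l
  · exact swap₂₃ (swap₃₄ (swap₂₃ (this l (by order) j (by order) (by order))))
  wlog hjk : j ≤ k generalizing j k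
  · exact swap₂₃ (this j hij k hik hjl hkl (by order))
  rcases hij.eq_or_lt with rfl | hij
  · rw [pluckerRelator, hdiag]
    ring
  rcases hjk.eq_or_lt with rfl | hjk
  · rw [pluckerRelator, hdiag]
    ring
  rcases hkl.eq_or_lt with rfl | hkl
  · rw [pluckerRelator, hdiag]
    ring
  exact h i j k l hij hjk hkl

section PluckerMatrix

variable {R : Type*} [CommRing R]

theorem pluckerMatrix_injective :
    Function.Injective (pluckerMatrix : (Fin 6 → R) → Matrix (Fin 4) (Fin 4) R) := by
  intro p q h
  have entry_eq (i j : Fin 4) : pluckerMatrix p i j = pluckerMatrix q i j := congrFun₂ h i j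
  ext k
  fin_cases k
  exacts [entry_eq 0 1, entry_eq 0 2, entry_eq 0 3, entry_eq 2 3, entry_eq 3 1, entry_eq 1 2]

theorem pluckerMatrix_zero : pluckerMatrix (0 : Fin 6 → R) = 0 := by
  ext i j
  fin_cases i <;> fin_cases j <;> simp [pluckerMatrix]

theorem pluckerMatrix_apply_self (p : Fin 6 → R) (i : Fin 4) : pluckerMatrix p i i = 0 := by
  fin_cases i <;> rfl

theorem pluckerMatrix_apply_swap (p : Fin 6 → R) (i j : Fin 4) :
    pluckerMatrix p j i = -pluckerMatrix p i j := by
  fin_cases i <;> fin_cases j <;> simp [pluckerMatrix]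

theorem pluckerRelations_pluckerMatrix {p : Fin 6 → R}
    (hp : p 0 * p 3 + p 1 * p 4 + p 2 * p 5 = 0) : PluckerRelations (pluckerMatrix p) := by
  refine pluckerRelations_of_lt (pluckerMatrix_apply_self p) (pluckerMatrix_apply_swap p)
    fun i j k l hij hjk hkl ↦ ?_
  obtain ⟨rfl, rfl, rfl, rfl⟩ : i = 0 ∧ j = 1 ∧ k = 2 ∧ l = 3 := by omega
  calc pluckerRelator (pluckerMatrix p) 0 1 2 3
    _ = p 0 * p 3 - p 1 * -p 4 + p 2 * p 5 := rfl
    _ = 0 := by linear_combination hp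

end PluckerMatrix

theorem pluckerMatrix_pluck (x y : Fin 4 → ℝ) : pluckerMatrix (pluck x y) = wedgeMatrix x y := by
  ext i j
  fin_cases i <;> fin_cases j <;> simp [pluckerMatrix, pluck, wedgeMatrix_apply] <;> ring

theorem klein_mapping_surjective (p : Fin 6 → ℝ) (hp : p ≠ 0)
    (hΩ : kleinForm p = 0) :
    ∃ x y : Fin 4 → ℝ, LinearIndependent ℝ ![x, y] ∧ pluck x y = p := by
  obtain ⟨x, y, hxy, hwedge⟩ := klein_mapping_surjective_general (pluckerMatrix p)
    ((pluckerMatrix_injective.ne_iff' pluckerMatrix_zero).mpr hp)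
    (pluckerRelations_pluckerMatrix hΩ)
  exact ⟨x, y, hxy, pluckerMatrix_injective ((pluckerMatrix_pluck x y).trans hwedge)⟩
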